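/- There exists an absolute constant C > 0 such that for every finite set P of N points in the real plane ℝ² and every integer r ≥ 2, the number of r-rich lines, i.e. lines of ℝ² containing at least r points of P, is at most C·(N²/r³ + N/r). -/

import Mathlib

/-!
The proof is Székely's, through the crossing lemma for straight-line drawings.

A generic shear gives the points distinct abscissae, so that every line through two of them becomes
a graph `y = m x + k`. Given `M` such `r`-rich lines, join consecutive points along each line
(`lineEdges`). This drawing has `N` vertices and at least `M (r - 1) ≥ M r / 2` edges, and at most
`M ^ 2` ordered pairs of crossing edges, because two lines meet at most once. If it has fewer than
`4 N` edges then `M ≤ 8 N / r`; otherwise `crossing_lemma` (`e ^ 3 ≤ 64 N ^ 2 * crossings`) gives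
`M ≤ 512 N ^ 2 / r ^ 3`.

The crossing lemma follows by the usual random sampling of vertices with probability `4 N / e` from
`e ≤ 3 N + crossings`, which in turn follows from the bound `e ≤ 3 N` for crossing-free drawings.
Euler's formula is not used for the latter (`card_le_of_noncrossing`). Instead, an edge which is
steepest among those leaving its left endpoint to the right is charged to that endpoint. Any other
edge `e` has a successor `f` in slope order at its left endpoint, and the leftmost vertex `v` of the
wedge between `e` and `f` (`exists_charge`) either has `f` as the first edge above it or `e` as the
first edge below it. The edge `e` is charged to `v`; each vertex receives at most three charges.
-/

/-- A line in `ℝ²` is an affine line, i.e. a set of the form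
`{(x, y) : a·x + b·y = c}` with `(a, b) ≠ (0, 0)`. -/
def IsLine (L : Set (ℝ × ℝ)) : Prop :=
  ∃ a b c : ℝ, (a, b) ≠ (0, 0) ∧ L = {p : ℝ × ℝ | a * p.1 + b * p.2 = c}

/-! ### Straight-line drawings -/

/-- The height at abscissa `x` of the non-vertical line `l = (m, k)`, i.e. of `y = m x + k`. -/
def ht (l : ℝ × ℝ) (x : ℝ) : ℝ := l.1 * x + l.2

/-- A non-vertical segment together with its supporting line, encoded as in `ht`. That the
endpoints lie on the line, in the right order, is a field of `GeomGraph`. -/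
@[ext]
structure Seg where
  line : ℝ × ℝ
  left : ℝ × ℝ
  right : ℝ × ℝ

/-- `x` is an interior abscissa of the segment `e`. -/
def Seg.Over (e : Seg) (x : ℝ) : Prop := e.left.1 < x ∧ x < e.right.1

/-- The relative interiors of two segments meet. A segment crosses itself, and overlapping
collinear segments cross. -/
def Crosses (e f : Seg) : Prop := ∃ x, e.Over x ∧ f.Over x ∧ ht e.line x = ht f.line x

/-- A straight-line drawing with vertex set `V` and edge set `E`: vertices have distinct
abscissae, edges join vertices, and no vertex lies in the interior of an edge. Edges are allowed
to cross. -/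
structure GeomGraph (V : Finset (ℝ × ℝ)) (E : Finset Seg) : Prop where
  inj : ∀ v ∈ V, ∀ w ∈ V, v.1 = w.1 → v = w
  left_mem : ∀ e ∈ E, e.left ∈ V
  right_mem : ∀ e ∈ E, e.right ∈ V
  lt : ∀ e ∈ E, e.left.1 < e.right.1
  left_on : ∀ e ∈ E, e.left.2 = ht e.line e.left.1
  right_on : ∀ e ∈ E, e.right.2 = ht e.line e.right.1
  empty : ∀ e ∈ E, ∀ v ∈ V, e.Over v.1 → v.2 ≠ ht e.line v.1

/-! ### Crossing-free drawings have linearly many edges -/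

/-- Two affine functions in opposite strict order at two points agree strictly in between. -/
lemma exists_ht_eq {l m : ℝ × ℝ} {x y : ℝ} (h1 : ht l x < ht m x) (h2 : ht m y < ht l y) :
    ∃ z, min x y < z ∧ z < max x y ∧ ht l z = ht m z := by
  unfold ht at *
  have key : ∀ (l m : ℝ × ℝ) (x y : ℝ), x < y → l.1 * x + l.2 < m.1 * x + m.2 →
      m.1 * y + m.2 < l.1 * y + l.2 → ∃ z, x < z ∧ z < y ∧ l.1 * z + l.2 = m.1 * z + m.2 := by
    intro l m x y hxy h1 h2
    have hs : 0 < l.1 - m.1 := by nlinarith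
    refine ⟨(m.2 - l.2) / (l.1 - m.1), ?_, ?_, ?_⟩
    · rw [lt_div_iff₀ hs]; linarith
    · rw [div_lt_iff₀ hs]; linarith
    · field_simp; ring
  rcases lt_trichotomy x y with h | h | h
  · rw [min_eq_left h.le, max_eq_right h.le]; exact key l m x y h h1 h2
  · subst h; linarith
  · rw [min_eq_right h.le, max_eq_left h.le]
    obtain ⟨z, a, b, c⟩ := key m l y x h h2 h1
    exact ⟨z, a, b, c.symm⟩

/-- Over a common closed abscissa range, two non-crossing segments never switch their vertical
order. -/
lemma ht_le_of_not_crosses {e f : Seg} (h : ¬ Crosses e f) {x y : ℝ}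
    (hex : e.left.1 ≤ x) (hex' : x ≤ e.right.1) (hfx : f.left.1 ≤ x) (hfx' : x ≤ f.right.1)
    (hey : e.left.1 ≤ y) (hey' : y ≤ e.right.1) (hfy : f.left.1 ≤ y) (hfy' : y ≤ f.right.1)
    (hx : ht e.line x < ht f.line x) : ht e.line y ≤ ht f.line y := by
  by_contra! hy
  obtain ⟨z, h1, h2, h3⟩ := exists_ht_eq hx hy
  have := le_min hex hey
  have := le_min hfx hfy
  have := max_le hex' hey'
  have := max_le hfx' hfy'
  exact h ⟨z, ⟨by linarith, by linarith⟩, ⟨by linarith, by linarith⟩, h3⟩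

/-- Two lines agreeing at two abscissae coincide. -/
lemma line_eq {l m : ℝ × ℝ} {x y : ℝ} (hxy : x ≠ y) (h1 : ht l x = ht m x)
    (h2 : ht l y = ht m y) : l = m := by
  unfold ht at *
  have h : (l.1 - m.1) * (x - y) = 0 := by linarith
  have h3 : l.1 = m.1 := by
    rcases mul_eq_zero.1 h with h | h
    · linarith
    · exact absurd (sub_eq_zero.1 h) hxy
  refine Prod.ext h3 ?_
  rw [h3] at h1; linarith

/-- `f` is the successor of `e` in the slope order among the edges with the same left endpoint. -/
def IsSucc (E : Finset Seg) (e f : Seg) : Prop :=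
  e ∈ E ∧ f ∈ E ∧ f.left = e.left ∧ e.line.1 < f.line.1 ∧
    ∀ g ∈ E, g.left = e.left → e.line.1 < g.line.1 → f.line.1 ≤ g.line.1

/-- `f` is the first edge met by the open upward vertical ray from `v`. -/
def LowestAbove (E : Finset Seg) (v : ℝ × ℝ) (f : Seg) : Prop :=
  f ∈ E ∧ f.Over v.1 ∧ v.2 < ht f.line v.1 ∧
    ∀ g ∈ E, g.Over v.1 → v.2 < ht g.line v.1 → ht f.line v.1 ≤ ht g.line v.1

/-- `e` is the first edge met by the open downward vertical ray from `v`. -/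
def HighestBelow (E : Finset Seg) (v : ℝ × ℝ) (e : Seg) : Prop :=
  e ∈ E ∧ e.Over v.1 ∧ ht e.line v.1 < v.2 ∧
    ∀ g ∈ E, g.Over v.1 → ht g.line v.1 < v.2 → ht g.line v.1 ≤ ht e.line v.1

section Plane

variable {V : Finset (ℝ × ℝ)} {E : Finset Seg}

lemma eq_of_slope_eq (G : GeomGraph V E) (hE : ∀ e ∈ E, ∀ f ∈ E, e ≠ f → ¬ Crosses e f)
    {e f : Seg} (he : e ∈ E) (hf : f ∈ E) (hl : e.left = f.left) (hs : e.line.1 = f.line.1) :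
    e = f := by
  by_contra hne
  apply hE e he f hf hne
  have h1 := G.lt e he
  have h2 := G.lt f hf
  have hm : e.left.1 < min e.right.1 f.right.1 := lt_min h1 (hl ▸ h2)
  obtain ⟨x, hx, hx'⟩ := exists_between hm
  have := min_le_left e.right.1 f.right.1
  have := min_le_right e.right.1 f.right.1
  refine ⟨x, ⟨hx, by linarith⟩, ⟨hl ▸ hx, by linarith⟩, ?_⟩
  have h3 := G.left_on e he
  have h4 := G.left_on f hf
  unfold ht at *
  rw [hl] at h3
  rw [hs] at h3 ⊢
  linarith

/-- The first vertex `v` of the wedge between two consecutive edges `e`, `f` from a common left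
endpoint sees `f` directly above it, or `e` directly below it: an edge seen earlier would start
inside the wedge, before `v`, or enter it by crossing `e` or `f`. -/
lemma exists_charge (G : GeomGraph V E) (hE : ∀ e ∈ E, ∀ f ∈ E, e ≠ f → ¬ Crosses e f)
    {e f : Seg} (h : IsSucc E e f) : ∃ v ∈ V, LowestAbove E v f ∨ HighestBelow E v e := by
  classical
  obtain ⟨he, hf, hl, hs, hmin⟩ := h
  have hef : e ≠ f := by rintro rfl; exact lt_irrefl _ hs
  have e1 := G.left_on e he
  have f1 := G.left_on f hf
  have e2 := G.right_on e he
  have f2 := G.right_on f hf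
  have e3 := G.lt e he
  have f3 := G.lt f hf
  rw [hl] at f1 f3
  have hlt : ∀ g k : Seg, g.left.2 = ht g.line g.left.1 → g.left.2 = ht k.line g.left.1 →
      g.line.1 < k.line.1 → ∀ x, g.left.1 < x → ht g.line x < ht k.line x := by
    intro g k h1 h2 h3 x hx
    unfold ht at *
    nlinarith [mul_pos (sub_pos.2 h3) (sub_pos.2 hx)]
  have hefx := hlt e f e1 f1 hs
  -- The vertices of the closed wedge, up to the first right endpoint of its two sides.
  let W := V.filter fun v => e.left.1 < v.1 ∧ v.1 ≤ e.right.1 ∧ v.1 ≤ f.right.1 ∧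
    ht e.line v.1 ≤ v.2 ∧ v.2 ≤ ht f.line v.1
  have hW : W.Nonempty := by
    rcases le_total e.right.1 f.right.1 with h | h
    · refine ⟨e.right, Finset.mem_filter.2 ⟨G.right_mem e he, e3, le_rfl, h, e2.ge, ?_⟩⟩
      rw [e2]; exact (hefx _ e3).le
    · refine ⟨f.right, Finset.mem_filter.2 ⟨G.right_mem f hf, f3, h, le_rfl, ?_, f2.le⟩⟩
      rw [f2]; exact (hefx _ f3).le
  obtain ⟨v, hvW, hvmin⟩ := Finset.exists_min_image W Prod.fst hW
  obtain ⟨hvV, hv1, hv2, hv3, hv4, hv5⟩ := Finset.mem_filter.1 hvW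
  have key : ∀ g ∈ E, g.Over v.1 → ht e.line v.1 < ht g.line v.1 →
      ht g.line v.1 < ht f.line v.1 → False := by
    intro g hg hov h1 h2
    obtain ⟨ho1, ho2⟩ := hov
    have hge : g ≠ e := by rintro rfl; exact lt_irrefl _ h1
    have hgf : g ≠ f := by rintro rfl; exact lt_irrefl _ h2
    have g1 := G.left_on g hg
    rcases lt_trichotomy g.left.1 e.left.1 with hc | hc | hc
    · have hne := G.empty g hg e.left (G.left_mem e he) ⟨hc, by linarith⟩
      rcases lt_or_gt_of_ne hne with hside | hside
      · -- `g` passes above the apex, so it would have to cross `f`.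
        have := ht_le_of_not_crosses (hE f hf g hg hgf.symm) (x := e.left.1) (y := v.1)
          (by rw [hl]) (by linarith) hc.le (by linarith) (by rw [hl]; linarith) hv3 ho1.le ho2.le
          (by rw [← f1]; exact hside)
        linarith
      · have := ht_le_of_not_crosses (hE g hg e he hge) (x := e.left.1) (y := v.1)
          hc.le (by linarith) le_rfl (by linarith) ho1.le ho2.le (by linarith) hv2
          (by rw [← e1]; exact hside)
        linarith
    · have hgl : g.left = e.left := G.inj _ (G.left_mem g hg) _ (G.left_mem e he) hc
      have hs1 : e.line.1 < g.line.1 := by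
        by_contra! hcon
        rcases hcon.lt_or_eq with hcon | hcon
        · have := hlt g e g1 (by rw [hgl]; exact e1) hcon v.1 (by rw [hgl]; exact hv1)
          linarith
        · exact hge (eq_of_slope_eq G hE hg he hgl hcon)
      have hs2 := hmin g hg hgl hs1
      rcases hs2.lt_or_eq with hcon | hcon
      · have := hlt f g (by rw [hl]; exact f1) (by rw [hl, ← hgl]; exact g1) hcon v.1
          (by rw [hl]; exact hv1)
        linarith
      · exact hgf (eq_of_slope_eq G hE hf hg (hl.trans hgl.symm) hcon).symm
    · -- `g` starts inside the wedge, contradicting the choice of `v`.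
      have h3 := ht_le_of_not_crosses (hE e he g hg hge.symm) (x := v.1) (y := g.left.1)
        hv1.le hv2 ho1.le ho2.le hc.le (by linarith) le_rfl (by linarith) h1
      have h4 := ht_le_of_not_crosses (hE g hg f hf hgf) (x := v.1) (y := g.left.1)
        ho1.le ho2.le (by rw [hl]; linarith) hv3 le_rfl (by linarith) (by rw [hl]; exact hc.le)
        (by linarith) h2
      rw [← g1] at h3 h4
      have := hvmin g.left (Finset.mem_filter.2 ⟨G.left_mem g hg, hc, by linarith, by linarith,
        h3, h4⟩)
      linarith
  refine ⟨v, hvV, ?_⟩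
  rcases hv5.lt_or_eq with hlt' | heq
  · left
    have hvf : v.1 < f.right.1 := by
      refine lt_of_le_of_ne hv3 fun hh => ?_
      have := G.inj v hvV _ (G.right_mem f hf) hh
      rw [this, ← f2] at hlt'
      exact lt_irrefl _ hlt'
    refine ⟨hf, ⟨by rw [hl]; exact hv1, hvf⟩, hlt', fun g hg hov hgv => ?_⟩
    by_contra! hcon
    exact key g hg hov (by linarith) hcon
  · right
    have hlt2 := hefx v.1 hv1
    have hve : v.1 < e.right.1 := by
      refine lt_of_le_of_ne hv2 fun hh => ?_
      have := G.inj v hvV _ (G.right_mem e he) hh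
      rw [this, ← e2] at hlt2
      rw [this] at heq
      linarith
    refine ⟨he, ⟨hv1, hve⟩, by linarith, fun g hg hov hgv => ?_⟩
    by_contra! hcon
    exact key g hg hov hcon (by linarith)

/-- A crossing-free drawing on `n` vertices has at most `3n` edges: every vertex is charged at most
once for the steepest edge leaving it to the right, once for the edge directly above it and once
for the edge directly below it. -/
lemma card_le_of_noncrossing (G : GeomGraph V E)
    (hE : ∀ e ∈ E, ∀ f ∈ E, e ≠ f → ¬ Crosses e f) : E.card ≤ 3 * V.card := by
  classical
  let T := E.filter fun e => ∀ g ∈ E, g.left = e.left → g.line.1 ≤ e.line.1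
  let A := E.filter fun e => ∃ v ∈ V, ∃ f, IsSucc E e f ∧ LowestAbove E v f
  let B := E.filter fun e => ∃ v ∈ V, HighestBelow E v e
  have hsub : E ⊆ T ∪ (A ∪ B) := by
    intro e he
    by_cases hT : ∀ g ∈ E, g.left = e.left → g.line.1 ≤ e.line.1
    · exact Finset.mem_union_left _ (Finset.mem_filter.2 ⟨he, hT⟩)
    · push Not at hT
      obtain ⟨g, hg, hgl, hgs⟩ := hT
      obtain ⟨f, hf, hfmin⟩ := Finset.exists_min_image
        (E.filter fun g => g.left = e.left ∧ e.line.1 < g.line.1) (fun g => g.line.1)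
        ⟨g, Finset.mem_filter.2 ⟨hg, hgl, hgs⟩⟩
      obtain ⟨hfE, hfl, hfs⟩ := Finset.mem_filter.1 hf
      have hsucc : IsSucc E e f := ⟨he, hfE, hfl, hfs, fun k hk hkl hks =>
        hfmin k (Finset.mem_filter.2 ⟨hk, hkl, hks⟩)⟩
      obtain ⟨v, hv, h | h⟩ := exists_charge G hE hsucc
      · exact Finset.mem_union_right _ (Finset.mem_union_left _
          (Finset.mem_filter.2 ⟨he, v, hv, f, hsucc, h⟩))
      · exact Finset.mem_union_right _ (Finset.mem_union_right _
          (Finset.mem_filter.2 ⟨he, v, hv, h⟩))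
  have hTc : T.card ≤ V.card := by
    refine Finset.card_le_card_of_injOn Seg.left (fun e he => ?_) ?_
    · exact G.left_mem e (Finset.mem_filter.1 he).1
    · intro e he f hf hl
      obtain ⟨he, he'⟩ := Finset.mem_filter.1 he
      obtain ⟨hf, hf'⟩ := Finset.mem_filter.1 hf
      exact eq_of_slope_eq G hE he hf hl (le_antisymm (hf' e he hl) (he' f hf hl.symm))
  have hAc : A.card ≤ V.card := by
    refine Finset.card_le_card_of_forall_subsingleton
      (fun e v => ∃ f, IsSucc E e f ∧ LowestAbove E v f)
      (fun e he => (Finset.mem_filter.1 he).2) ?_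
    rintro v hv e ⟨-, f, hs, ha⟩ e' ⟨-, f', hs', ha'⟩
    obtain ⟨hf, ho, hlt, hm⟩ := ha
    obtain ⟨hf', ho', hlt', hm'⟩ := ha'
    have hff : f = f' := by
      by_contra hne
      exact hE f hf f' hf' hne ⟨v.1, ho, ho', le_antisymm (hm _ hf' ho' hlt') (hm' _ hf ho hlt)⟩
    subst hff
    obtain ⟨he, -, hl, hs1, hs2⟩ := hs
    obtain ⟨he', -, hl', hs1', hs2'⟩ := hs'
    refine eq_of_slope_eq G hE he he' (hl.symm.trans hl') ?_
    rcases lt_trichotomy e.line.1 e'.line.1 with h | h | h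
    · exact absurd (hs2 e' he' (hl'.symm.trans hl) h) (not_le.2 hs1')
    · exact h
    · exact absurd (hs2' e he (hl.symm.trans hl') h) (not_le.2 hs1)
  have hBc : B.card ≤ V.card := by
    refine Finset.card_le_card_of_forall_subsingleton (fun e v => HighestBelow E v e)
      (fun e he => (Finset.mem_filter.1 he).2) ?_
    rintro v hv f ⟨-, hf, ho, hlt, hm⟩ f' ⟨-, hf', ho', hlt', hm'⟩
    by_contra hne
    exact hE f hf f' hf' hne ⟨v.1, ho, ho', le_antisymm (hm' _ hf ho hlt) (hm _ hf' ho' hlt')⟩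
  have h1 := Finset.card_le_card hsub
  have h2 := Finset.card_union_le T (A ∪ B)
  have h3 := Finset.card_union_le A B
  omega

end Plane

/-! ### The crossing lemma -/

section Crossing

variable {V : Finset (ℝ × ℝ)} {E : Finset Seg}

/-- Edges on the same line do not overlap. -/
lemma eq_of_line_eq (G : GeomGraph V E) {e f : Seg} (he : e ∈ E) (hf : f ∈ E)
    (hl : e.line = f.line) {x : ℝ} (hex : e.Over x) (hfx : f.Over x) : e = f := by
  have aux : ∀ e ∈ E, ∀ f ∈ E, e.line = f.line → e.Over x → f.Over x →
      f.left.1 ≤ e.left.1 ∧ e.right.1 ≤ f.right.1 := by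
    intro e he f hf hl hex hfx
    constructor
    · by_contra! h
      exact G.empty e he f.left (G.left_mem f hf) ⟨h, hfx.1.trans hex.2⟩
        (by rw [hl]; exact G.left_on f hf)
    · by_contra! h
      exact G.empty e he f.right (G.right_mem f hf) ⟨hex.1.trans hfx.2, h⟩
        (by rw [hl]; exact G.right_on f hf)
  obtain ⟨h1, h2⟩ := aux e he f hf hl hex hfx
  obtain ⟨h3, h4⟩ := aux f hf e he hl.symm hfx hex
  exact Seg.ext hl (G.inj _ (G.left_mem e he) _ (G.left_mem f hf) (le_antisymm h3 h1))
    (G.inj _ (G.right_mem e he) _ (G.right_mem f hf) (le_antisymm h2 h4))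

open Classical in
/-- The set of endpoints of an edge. -/
noncomputable def Seg.ends (e : Seg) : Finset (ℝ × ℝ) := {e.left, e.right}

lemma card_ends (G : GeomGraph V E) {e : Seg} (he : e ∈ E) : e.ends.card = 2 := by
  classical
  unfold Seg.ends
  refine Finset.card_pair fun h => ?_
  have := G.lt e he
  rw [h] at this
  exact lt_irrefl _ this

lemma ends_subset (G : GeomGraph V E) {e : Seg} (he : e ∈ E) : e.ends ⊆ V := by
  classical
  unfold Seg.ends
  intro v hv
  rcases Finset.mem_insert.1 hv with rfl | hv
  · exact G.left_mem e he
  · rw [Finset.mem_singleton.1 hv]; exact G.right_mem e he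

/-- Crossing edges have four distinct endpoints, since their lines meet only at the crossing. -/
lemma disjoint_ends (G : GeomGraph V E) {e f : Seg} (he : e ∈ E) (hf : f ∈ E) (hne : e ≠ f)
    (hc : Crosses e f) : Disjoint e.ends f.ends := by
  classical
  have hon : ∀ e ∈ E, ∀ v ∈ e.ends, v.2 = ht e.line v.1 ∧ ∀ x, e.Over x → x ≠ v.1 := by
    intro e he v hv
    unfold Seg.ends at hv
    rcases Finset.mem_insert.1 hv with rfl | hv
    · exact ⟨G.left_on e he, fun x hx => hx.1.ne'⟩
    · rw [Finset.mem_singleton.1 hv]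
      exact ⟨G.right_on e he, fun x hx => hx.2.ne⟩
  obtain ⟨x, hex, hfx, hx⟩ := hc
  refine Finset.disjoint_left.2 fun v hv hv' => hne ?_
  obtain ⟨h1, h2⟩ := hon e he v hv
  obtain ⟨h3, -⟩ := hon f hf v hv'
  exact eq_of_line_eq G he hf (line_eq (h2 x hex) hx (h1.symm.trans h3)) hex hfx

open Classical in
/-- The ordered pairs of distinct crossing edges. -/
noncomputable def crossings (E : Finset Seg) : Finset (Seg × Seg) :=
  (E ×ˢ E).filter fun q => q.1 ≠ q.2 ∧ Crosses q.1 q.2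

lemma mem_crossings {q : Seg × Seg} :
    q ∈ crossings E ↔ (q.1 ∈ E ∧ q.2 ∈ E) ∧ q.1 ≠ q.2 ∧ Crosses q.1 q.2 := by
  classical
  simp [crossings]

/-- Deleting every edge involved in a crossing leaves a crossing-free drawing. -/
lemma card_le_add_crossings (G : GeomGraph V E) :
    E.card ≤ 3 * V.card + (crossings E).card := by
  classical
  let F := E \ (crossings E).image Prod.fst
  have hFE : F ⊆ E := Finset.sdiff_subset
  have GF : GeomGraph V F :=
    { inj := G.inj
      left_mem := fun e he => G.left_mem e (hFE he)
      right_mem := fun e he => G.right_mem e (hFE he)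
      lt := fun e he => G.lt e (hFE he)
      left_on := fun e he => G.left_on e (hFE he)
      right_on := fun e he => G.right_on e (hFE he)
      empty := fun e he => G.empty e (hFE he) }
  have h1 := card_le_of_noncrossing GF (by
    intro e he f hf hne hc
    exact (Finset.mem_sdiff.1 he).2 (Finset.mem_image.2
      ⟨(e, f), mem_crossings.2 ⟨⟨hFE he, hFE hf⟩, hne, hc⟩, rfl⟩))
  have h2 : E.card ≤ F.card + ((crossings E).image Prod.fst).card := by
    have := Finset.le_card_sdiff ((crossings E).image Prod.fst) E
    change _ ≤ F.card at this
    omega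
  have h3 : ((crossings E).image Prod.fst).card ≤ (crossings E).card := Finset.card_image_le
  omega

/-- The preceding bound for the subdrawing induced on a vertex subset `S`. -/
lemma induced_card_le (G : GeomGraph V E) [DecidableEq (ℝ × ℝ)] {S : Finset (ℝ × ℝ)}
    (hS : S ⊆ V) :
    (E.filter fun e => e.ends ⊆ S).card ≤ 3 * (V.filter fun v => {v} ⊆ S).card +
      ((crossings E).filter fun q => q.1.ends ∪ q.2.ends ⊆ S).card := by
  classical
  have hVS : (V.filter fun v => {v} ⊆ S) = S := by
    ext v
    simp only [Finset.mem_filter, Finset.singleton_subset_iff]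
    exact ⟨fun h => h.2, fun h => ⟨hS h, h⟩⟩
  rw [hVS]
  set F := E.filter fun e => e.ends ⊆ S with hF
  have hFE : F ⊆ E := Finset.filter_subset _ _
  have hl : ∀ e ∈ F, e.left ∈ S := fun e he =>
    (Finset.mem_filter.1 he).2 (by simp [Seg.ends])
  have hr : ∀ e ∈ F, e.right ∈ S := fun e he =>
    (Finset.mem_filter.1 he).2 (by simp [Seg.ends])
  have GF : GeomGraph S F :=
    { inj := fun v hv w hw => G.inj v (hS hv) w (hS hw)
      left_mem := hl
      right_mem := hr
      lt := fun e he => G.lt e (hFE he)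
      left_on := fun e he => G.left_on e (hFE he)
      right_on := fun e he => G.right_on e (hFE he)
      empty := fun e he v hv => G.empty e (hFE he) v (hS hv) }
  refine (card_le_add_crossings GF).trans (Nat.add_le_add_left (Finset.card_le_card ?_) _)
  intro q hq
  obtain ⟨⟨h1, h2⟩, h3⟩ := mem_crossings.1 hq
  exact Finset.mem_filter.2 ⟨mem_crossings.2 ⟨⟨hFE h1, hFE h2⟩, h3⟩,
    Finset.union_subset (Finset.mem_filter.1 h1).2 (Finset.mem_filter.1 h2).2⟩

end Crossing

/-- A `p`-random subset of `V` contains a given `T ⊆ V` with probability `p ^ #T`. -/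
lemma sum_weight {α : Type*} [DecidableEq α] (V T : Finset α) (hT : T ⊆ V) (p : ℝ) :
    ∑ S ∈ V.powerset, p ^ S.card * (1 - p) ^ (V \ S).card * (if T ⊆ S then 1 else 0) =
      p ^ T.card := by
  have h := Finset.prod_add (fun _ => p) (fun i => if i ∈ T then 0 else 1 - p) V
  have h1 : ∏ i ∈ V, (p + if i ∈ T then 0 else 1 - p) = p ^ T.card := by
    have : ∀ i ∈ V, (p + if i ∈ T then 0 else 1 - p) = if i ∈ T then p else 1 := by
      intro i _; split_ifs <;> ring
    rw [Finset.prod_congr rfl this, Finset.prod_ite_mem, Finset.prod_const,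
      Finset.inter_eq_right.2 hT]
  rw [← h1, h]
  refine Finset.sum_congr rfl fun S hS => ?_
  rw [Finset.prod_const, mul_assoc]
  congr 1
  split_ifs with hTS
  · rw [mul_one, Finset.prod_congr rfl (g := fun _ => 1 - p), Finset.prod_const]
    intro i hi
    exact if_neg fun hiT => (Finset.mem_sdiff.1 hi).2 (hTS hiT)
  · obtain ⟨i, hiT, hiS⟩ := Finset.not_subset.1 hTS
    rw [mul_zero]
    symm
    apply Finset.prod_eq_zero (Finset.mem_sdiff.2 ⟨hT hiT, hiS⟩)
    exact if_pos hiT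

/-- The expected number of objects of `I`, each determined by `k` elements of `V`, that survive in a
`p`-random subset of `V`. -/
lemma sum_weight_card {α ι : Type*} [DecidableEq α] (V : Finset α) (I : Finset ι)
    (T : ι → Finset α) (k : ℕ) (hT : ∀ i ∈ I, T i ⊆ V) (hk : ∀ i ∈ I, (T i).card = k) (p : ℝ) :
    ∑ S ∈ V.powerset, p ^ S.card * (1 - p) ^ (V \ S).card *
      ((I.filter fun i => T i ⊆ S).card : ℝ) = I.card * p ^ k := by
  have : ∀ S ∈ V.powerset, p ^ S.card * (1 - p) ^ (V \ S).card *
      ((I.filter fun i => T i ⊆ S).card : ℝ) =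
      ∑ i ∈ I, p ^ S.card * (1 - p) ^ (V \ S).card * (if T i ⊆ S then 1 else 0) := by
    intro S _
    rw [← Finset.mul_sum, Finset.sum_boole]
  rw [Finset.sum_congr rfl this, Finset.sum_comm,
    Finset.sum_congr rfl fun i hi => (sum_weight V (T i) (hT i hi) p).trans (by rw [hk i hi]),
    Finset.sum_const, nsmul_eq_mul]

/-- The crossing lemma for straight-line drawings; crossings are counted as ordered pairs. -/
lemma crossing_lemma {V : Finset (ℝ × ℝ)} {E : Finset Seg} (G : GeomGraph V E)
    (hV : 0 < V.card) (h : 4 * V.card ≤ E.card) :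
    (E.card : ℝ) ^ 3 ≤ 64 * (V.card : ℝ) ^ 2 * (crossings E).card := by
  classical
  have key : ∀ p : ℝ, 0 ≤ p → p ≤ 1 → (E.card : ℝ) * p ^ 2 ≤
      3 * (V.card * p ^ 1) + (crossings E).card * p ^ 4 := by
    intro p hp0 hp1
    rw [← sum_weight_card V E Seg.ends 2 (fun e he => ends_subset G he)
      (fun e he => card_ends G he) p,
      ← sum_weight_card V V (fun v => {v}) 1 (fun v hv => Finset.singleton_subset_iff.2 hv)
      (fun v hv => Finset.card_singleton v) p,
      ← sum_weight_card V (crossings E) (fun q => q.1.ends ∪ q.2.ends) 4 ?_ ?_ p,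
      Finset.mul_sum, ← Finset.sum_add_distrib]
    · refine Finset.sum_le_sum fun S hS => ?_
      have h1 := induced_card_le G (Finset.mem_powerset.1 hS)
      have h2 : ((E.filter fun e => e.ends ⊆ S).card : ℝ) ≤
        3 * (V.filter fun v => {v} ⊆ S).card +
          ((crossings E).filter fun q => q.1.ends ∪ q.2.ends ⊆ S).card := by exact_mod_cast h1
      have h3 : 0 ≤ p ^ S.card * (1 - p) ^ (V \ S).card :=
        mul_nonneg (pow_nonneg hp0 _) (pow_nonneg (by linarith) _)
      calc _ ≤ _ := mul_le_mul_of_nonneg_left h2 h3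
        _ = _ := by ring
    · intro q hq
      obtain ⟨⟨h1, h2⟩, -⟩ := mem_crossings.1 hq
      exact Finset.union_subset (ends_subset G h1) (ends_subset G h2)
    · intro q hq
      obtain ⟨⟨h1, h2⟩, h3, h4⟩ := mem_crossings.1 hq
      rw [Finset.card_union_of_disjoint (disjoint_ends G h1 h2 h3 h4), card_ends G h1,
        card_ends G h2]
  set n : ℝ := (V.card : ℝ) with hn
  set m : ℝ := (E.card : ℝ) with hm
  set c : ℝ := ((crossings E).card : ℝ) with hc
  have hn0 : 0 < n := by rw [hn]; exact_mod_cast hV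
  have hm4 : 4 * n ≤ m := by rw [hn, hm]; exact_mod_cast h
  have hm0 : 0 < m := by linarith
  -- `p = 4n/m` makes the edge term exceed the vertex term by a constant factor.
  have h1 := key (4 * n / m) (by positivity) (by rw [div_le_one hm0]; exact hm4)
  have h2 : 4 * n ^ 2 / m ≤ c * (256 * n ^ 4 / m ^ 4) := by
    have e1 : m * (4 * n / m) ^ 2 = 16 * n ^ 2 / m := by field_simp; norm_num
    have e2 : 3 * (n * (4 * n / m) ^ 1) = 12 * n ^ 2 / m := by field_simp; norm_num
    have e3 : (4 * n / m) ^ 4 = 256 * n ^ 4 / m ^ 4 := by field_simp; norm_num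
    rw [e1, e2, e3] at h1
    have e4 : 16 * n ^ 2 / m = 12 * n ^ 2 / m + 4 * n ^ 2 / m := by ring
    linarith
  have h3 := mul_le_mul_of_nonneg_right h2 (by positivity : (0 : ℝ) ≤ m ^ 4 / (4 * n ^ 2))
  have e1 : 4 * n ^ 2 / m * (m ^ 4 / (4 * n ^ 2)) = m ^ 3 := by field_simp
  have e2 : c * (256 * n ^ 4 / m ^ 4) * (m ^ 4 / (4 * n ^ 2)) = 64 * n ^ 2 * c := by
    field_simp; ring
  rw [e1, e2] at h3
  exact h3

/-! ### Rich non-vertical lines -/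

open Classical in
/-- Székely's drawing: the segments joining consecutive points of `P` along the lines of `L`. -/
noncomputable def lineEdges (P L : Finset (ℝ × ℝ)) : Finset Seg :=
  ((L ×ˢ P ×ˢ P).image fun t => (⟨t.1, t.2.1, t.2.2⟩ : Seg)).filter fun e =>
    e.left.1 < e.right.1 ∧ e.left.2 = ht e.line e.left.1 ∧ e.right.2 = ht e.line e.right.1 ∧
      ∀ v ∈ P, e.Over v.1 → v.2 ≠ ht e.line v.1

lemma mem_lineEdges {P L : Finset (ℝ × ℝ)} {e : Seg} : e ∈ lineEdges P L ↔
    (e.line ∈ L ∧ e.left ∈ P ∧ e.right ∈ P) ∧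
    e.left.1 < e.right.1 ∧ e.left.2 = ht e.line e.left.1 ∧ e.right.2 = ht e.line e.right.1 ∧
      ∀ v ∈ P, e.Over v.1 → v.2 ≠ ht e.line v.1 := by
  classical
  rw [lineEdges, Finset.mem_filter]
  refine and_congr_left fun _ => ?_
  rw [Finset.mem_image]
  constructor
  · rintro ⟨⟨l, a, b⟩, ht, rfl⟩
    simpa using ht
  · intro h
    exact ⟨(e.line, e.left, e.right), by simpa using h, rfl⟩

lemma geomGraph_lineEdges {P L : Finset (ℝ × ℝ)}
    (inj : ∀ v ∈ P, ∀ w ∈ P, v.1 = w.1 → v = w) : GeomGraph P (lineEdges P L) where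
  inj := inj
  left_mem _ he := (mem_lineEdges.1 he).1.2.1
  right_mem _ he := (mem_lineEdges.1 he).1.2.2
  lt _ he := (mem_lineEdges.1 he).2.1
  left_on _ he := (mem_lineEdges.1 he).2.2.1
  right_on _ he := (mem_lineEdges.1 he).2.2.2.1
  empty _ he := (mem_lineEdges.1 he).2.2.2.2

/-- A pair of lines carries at most one crossing. -/
lemma card_crossings_lineEdges {P L : Finset (ℝ × ℝ)}
    (inj : ∀ v ∈ P, ∀ w ∈ P, v.1 = w.1 → v = w) :
    (crossings (lineEdges P L)).card ≤ L.card ^ 2 := by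
  classical
  have G : GeomGraph P (lineEdges P L) := geomGraph_lineEdges inj
  rw [sq, ← Finset.card_product]
  refine Finset.card_le_card_of_injOn (fun q => (q.1.line, q.2.line)) ?_ ?_
  · intro q hq
    obtain ⟨⟨h1, h2⟩, -⟩ := mem_crossings.1 hq
    exact Finset.mem_product.2 ⟨(mem_lineEdges.1 h1).1.1, (mem_lineEdges.1 h2).1.1⟩
  · intro q hq q' hq' hqq
    obtain ⟨⟨h1, h2⟩, hne, x, hx1, hx2, hx⟩ := mem_crossings.1 hq
    obtain ⟨⟨h1', h2'⟩, -, y, hy1, hy2, hy⟩ := mem_crossings.1 hq'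
    obtain ⟨e1, e2⟩ := Prod.mk.inj hqq
    have hxy : x = y := by
      by_contra hxy
      rw [← e1, ← e2] at hy
      exact hne (eq_of_line_eq G h1 h2 (line_eq hxy hx hy) hx1 hx2)
    subst hxy
    exact Prod.ext (eq_of_line_eq G h1 h1' e1 hx1 hy1) (eq_of_line_eq G h2 h2' e2 hx2 hy2)

/-- A line with at least `r` points of `P` carries at least `r - 1` edges: every point on it but the
last is the left endpoint of one. -/
lemma card_lineEdges {P L : Finset (ℝ × ℝ)} [DecidableEq (ℝ × ℝ)]
    (inj : ∀ v ∈ P, ∀ w ∈ P, v.1 = w.1 → v = w) {r : ℕ} (hr : 1 ≤ r)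
    (hL : ∀ l ∈ L, r ≤ (P.filter fun p => p.2 = ht l p.1).card) :
    L.card * (r - 1) ≤ (lineEdges P L).card := by
  classical
  rw [Finset.card_eq_sum_card_fiberwise (f := Seg.line) (t := L)
    (fun e he => (mem_lineEdges.1 he).1.1), ← smul_eq_mul]
  refine Finset.card_nsmul_le_sum _ _ _ fun l hl => ?_
  set Q := P.filter fun p => p.2 = ht l p.1 with hQ
  have hQr : r ≤ Q.card := hL l hl
  have hQn : Q.Nonempty := Finset.card_pos.1 (by omega)
  obtain ⟨z, hz, hzmax⟩ := Finset.exists_max_image Q Prod.fst hQn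
  have hsub : Q.erase z ⊆ ((lineEdges P L).filter fun e => e.line = l).image Seg.left := by
    intro a ha
    obtain ⟨haz, haQ⟩ := Finset.mem_erase.1 ha
    obtain ⟨haP, hal⟩ := Finset.mem_filter.1 haQ
    have hlt : a.1 < z.1 := lt_of_le_of_ne (hzmax a haQ) fun h =>
      haz (inj a haP z (Finset.mem_filter.1 hz).1 h)
    obtain ⟨b, hb, hbmin⟩ := Finset.exists_min_image (Q.filter fun p => a.1 < p.1) Prod.fst
      ⟨z, Finset.mem_filter.2 ⟨hz, hlt⟩⟩
    obtain ⟨hbQ, hab⟩ := Finset.mem_filter.1 hb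
    obtain ⟨hbP, hbl⟩ := Finset.mem_filter.1 hbQ
    refine Finset.mem_image.2 ⟨⟨l, a, b⟩, Finset.mem_filter.2 ⟨mem_lineEdges.2
      ⟨⟨hl, haP, hbP⟩, hab, hal, hbl, fun v hv hov hvl => ?_⟩, rfl⟩, rfl⟩
    have := hbmin v (Finset.mem_filter.2 ⟨Finset.mem_filter.2 ⟨hv, hvl⟩, hov.1⟩)
    exact absurd hov.2 (not_lt.2 this)
  have h1 := Finset.card_le_card hsub
  rw [Finset.card_erase_of_mem hz] at h1
  have h2 : (((lineEdges P L).filter fun e => e.line = l).image Seg.left).card ≤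
    ((lineEdges P L).filter fun e => e.line = l).card := Finset.card_image_le
  omega

lemma nonvertical_bound {P L : Finset (ℝ × ℝ)} [DecidableEq (ℝ × ℝ)]
    (inj : ∀ v ∈ P, ∀ w ∈ P, v.1 = w.1 → v = w) {r : ℕ} (hr : 2 ≤ r)
    (hL : ∀ l ∈ L, r ≤ (P.filter fun p => p.2 = ht l p.1).card) :
    (L.card : ℝ) ≤ 512 * ((P.card : ℝ) ^ 2 / (r : ℝ) ^ 3 + (P.card : ℝ) / (r : ℝ)) := by
  have hr2 : (2 : ℝ) ≤ r := by exact_mod_cast hr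
  have hr0 : (0 : ℝ) < r := by linarith
  rcases Nat.eq_zero_or_pos L.card with h0 | hLpos
  · rw [h0]; push_cast; positivity
  have hLp : (0 : ℝ) < L.card := by exact_mod_cast hLpos
  have hP : 0 < P.card := by
    obtain ⟨l, hl⟩ := Finset.card_pos.1 hLpos
    have h1 := hL l hl
    have h2 := Finset.card_filter_le P fun p => p.2 = ht l p.1
    omega
  have hE : (L.card : ℝ) * (r / 2) ≤ (lineEdges P L).card := by
    have h1 : ((L.card * (r - 1) : ℕ) : ℝ) ≤ (lineEdges P L).card := by
      exact_mod_cast card_lineEdges inj (by omega) hL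
    rw [Nat.cast_mul, Nat.cast_sub (by omega)] at h1
    push_cast at h1
    nlinarith
  have hn1 : 0 ≤ (P.card : ℝ) ^ 2 / (r : ℝ) ^ 3 := by positivity
  have hn2 : 0 ≤ (P.card : ℝ) / (r : ℝ) := by positivity
  rcases lt_or_ge (lineEdges P L).card (4 * P.card) with h | h
  · have h' : ((lineEdges P L).card : ℝ) < 4 * P.card := by exact_mod_cast h
    have : (L.card : ℝ) ≤ 8 * (P.card / r) := by
      rw [← mul_div_assoc, le_div_iff₀ hr0]; linarith
    linarith
  · have h1 := crossing_lemma (geomGraph_lineEdges inj) hP h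
    have h2 : ((crossings (lineEdges P L)).card : ℝ) ≤ (L.card : ℝ) ^ 2 := by
      exact_mod_cast card_crossings_lineEdges inj
    have h3 : ((L.card : ℝ) * (r / 2)) ^ 3 ≤ 64 * (P.card : ℝ) ^ 2 * (L.card : ℝ) ^ 2 :=
      (pow_le_pow_left₀ (by positivity) hE 3).trans
        (h1.trans (mul_le_mul_of_nonneg_left h2 (by positivity)))
    have h4 : (L.card : ℝ) * r ^ 3 ≤ 512 * (P.card : ℝ) ^ 2 := by
      have : (L.card : ℝ) ^ 2 * (L.card * r ^ 3) ≤ (L.card : ℝ) ^ 2 * (512 * P.card ^ 2) := by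
        linarith
      exact le_of_mul_le_mul_left this (by positivity)
    have : (L.card : ℝ) ≤ 512 * (P.card ^ 2 / r ^ 3) := by
      rw [← mul_div_assoc, le_div_iff₀ (by positivity)]; exact h4
    linarith

/-! ### Reduction to non-vertical lines by a shear -/

/-- Some shear `(x, y) ↦ (x + t y, y)` separates the abscissae of finitely many points. -/
lemma exists_shear (P : Finset (ℝ × ℝ)) :
    ∃ t : ℝ, ∀ v ∈ P, ∀ w ∈ P, v.1 + t * v.2 = w.1 + t * w.2 → v = w := by
  classical
  -- Each pair of points excludes at most one value of `t`.
  obtain ⟨t, ht⟩ := Infinite.exists_notMem_finset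
    ((P ×ˢ P).image fun q => (q.2.1 - q.1.1) / (q.1.2 - q.2.2))
  refine ⟨t, fun v hv w hw h => ?_⟩
  by_cases h2 : v.2 = w.2
  · rw [h2] at h
    exact Prod.ext (by linarith) h2
  · refine absurd (Finset.mem_image.2 ⟨(v, w), Finset.mem_product.2 ⟨hv, hw⟩, ?_⟩) ht
    rw [div_eq_iff (sub_ne_zero.2 h2)]
    linarith

/-- A line with two points of `P` is non-vertical after a shear as in `exists_shear`. -/
lemma exists_sheared_line {P : Finset (ℝ × ℝ)} {t : ℝ}
    (inj : ∀ v ∈ P, ∀ w ∈ P, v.1 + t * v.2 = w.1 + t * w.2 → v = w) {L : Set (ℝ × ℝ)}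
    (hL : IsLine L) (h2 : 2 ≤ ((↑P : Set (ℝ × ℝ)) ∩ L).ncard) :
    ∃ l : ℝ × ℝ, L = {p | p.2 = ht l (p.1 + t * p.2)} := by
  obtain ⟨a, b, c, hab, rfl⟩ := hL
  by_cases hb : b - t * a = 0
  · exfalso
    have ha : a ≠ 0 := by
      rintro rfl
      apply hab
      simpa using hb
    obtain ⟨v, hv, w, hw, hvw⟩ := (Set.one_lt_ncard_iff_nontrivial_and_finite.1 h2).1
    refine hvw (inj v hv.1 w hw.1 ?_)
    have h3 : a * v.1 + b * v.2 = c := hv.2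
    have h4 : a * w.1 + b * w.2 = c := hw.2
    have h5 : b = t * a := by linarith
    subst h5
    apply mul_left_cancel₀ ha
    linarith
  · refine ⟨(-a / (b - t * a), c / (b - t * a)), ?_⟩
    ext p
    simp only [Set.mem_ofPred_eq, ht]
    rw [show -a / (b - t * a) * (p.1 + t * p.2) + c / (b - t * a) =
      (-a * (p.1 + t * p.2) + c) / (b - t * a) by ring, eq_div_iff hb]
    constructor <;> intro h <;> linarith

/-- Any finite family of `r`-rich lines obeys the bound. -/
lemma finset_bound (P : Finset (ℝ × ℝ)) {r : ℕ} (hr : 2 ≤ r) (F : Finset (Set (ℝ × ℝ)))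
    (hF : ∀ L ∈ F, IsLine L ∧ r ≤ ((↑P : Set (ℝ × ℝ)) ∩ L).ncard) :
    (F.card : ℝ) ≤ 512 * ((P.card : ℝ) ^ 2 / (r : ℝ) ^ 3 + (P.card : ℝ) / (r : ℝ)) := by
  classical
  obtain ⟨t, inj⟩ := exists_shear P
  let φ : ℝ × ℝ → ℝ × ℝ := fun p => (p.1 + t * p.2, p.2)
  have hφ : Function.Injective φ := by
    intro p q h
    obtain ⟨h1, h2⟩ := Prod.mk.inj h
    rw [h2] at h1
    exact Prod.ext (by linarith) h2
  have hex : ∀ L, ∃ l : ℝ × ℝ, L ∈ F → L = {p | p.2 = ht l (p.1 + t * p.2)} := by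
    intro L
    by_cases hL : L ∈ F
    · obtain ⟨l, hl⟩ := exists_sheared_line inj (hF L hL).1 (hr.trans (hF L hL).2)
      exact ⟨l, fun _ => hl⟩
    · exact ⟨0, fun h => absurd h hL⟩
  choose l hl using hex
  have hlinj : Set.InjOn l F := by
    intro L hL L' hL' h
    rw [hl L hL, hl L' hL', h]
  rw [← Finset.card_image_of_injOn hlinj, ← Finset.card_image_of_injective P hφ]
  refine nonvertical_bound ?_ hr ?_
  · intro v hv w hw h
    obtain ⟨v, hvP, rfl⟩ := Finset.mem_image.1 hv
    obtain ⟨w, hwP, rfl⟩ := Finset.mem_image.1 hw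
    rw [inj v hvP w hwP h]
  · intro m hm
    obtain ⟨L, hL, rfl⟩ := Finset.mem_image.1 hm
    refine (hF L hL).2.trans ?_
    rw [← Set.ncard_image_of_injective _ hφ, ← Set.ncard_coe_finset]
    refine Set.ncard_le_ncard ?_ (Finset.finite_toSet _)
    rintro _ ⟨p, ⟨hpP, hpL⟩, rfl⟩
    rw [hl L hL] at hpL
    exact Finset.mem_coe.2 (Finset.mem_filter.2 ⟨Finset.mem_image_of_mem φ hpP, hpL⟩)

/-- **Szemerédi–Trotter theorem, rich lines form.** There is an absolute constant `C > 0`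
such that for every finite set `P` of `N` points in `ℝ²` and every integer `r ≥ 2`, the
number of `r`-rich lines (lines containing at least `r` points of `P`) is at most
`C·(N²/r³ + N/r)`. -/
theorem rich_lines_bound :
    ∃ C : ℝ, 0 < C ∧
      ∀ (P : Finset (ℝ × ℝ)) (r : ℕ), 2 ≤ r →
        {L : Set (ℝ × ℝ) | IsLine L ∧ r ≤ ((↑P : Set (ℝ × ℝ)) ∩ L).ncard}.Finite ∧
        ({L : Set (ℝ × ℝ) | IsLine L ∧ r ≤ ((↑P : Set (ℝ × ℝ)) ∩ L).ncard}.ncard : ℝ) ≤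
          C * ((P.card : ℝ) ^ 2 / (r : ℝ) ^ 3 + (P.card : ℝ) / (r : ℝ)) := by
  refine ⟨512, by norm_num, fun P r hr => ?_⟩
  set R := {L : Set (ℝ × ℝ) | IsLine L ∧ r ≤ ((↑P : Set (ℝ × ℝ)) ∩ L).ncard} with hR
  -- The uniform bound on finite subfamilies also yields finiteness.
  have hfin : R.Finite := by
    by_contra hinf
    obtain ⟨n, hn⟩ := exists_nat_gt
      (512 * ((P.card : ℝ) ^ 2 / (r : ℝ) ^ 3 + (P.card : ℝ) / (r : ℝ)))
    obtain ⟨F, hFR, hFn⟩ := Set.Infinite.exists_subset_card_eq hinf n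
    have := finset_bound P hr F fun L hL => hFR hL
    rw [hFn] at this
    linarith
  refine ⟨hfin, ?_⟩
  rw [Set.ncard_eq_toFinset_card _ hfin]
  exact finset_bound P hr _ fun L hL => hfin.mem_toFinset.1 hL
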